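/- arXiv:1004.4980 — 3 statements merged into one kernel-verified Lean document; each statement's English description precedes it below -/
import Mathlib

section
/- Let K be an infinite field and G a graph. Then the arithmetical rank of the cover ideal after localization at the irrelevant maximal ideal satisfies ara(J(G)S_m) ≤ gdim(G); in particular ara(J(G)S_m) ≤ ν(G)+1, where ν(G) is the matching number of G. -/
open MvPolynomial

/-- The irrelevant maximal ideal `m = (x_1, …, x_n)` of `S = K[x_1,…,x_n]`. -/
noncomputable def mIdeal (K : Type*) [Field K] (n : ℕ) : Ideal (MvPolynomial (Fin n) K) :=
  Ideal.span (Set.range MvPolynomial.X)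

theorem mIdeal_eq_ker (K : Type*) [Field K] (n : ℕ) :
    mIdeal K n = RingHom.ker (constantCoeff : MvPolynomial (Fin n) K →+* K) := by
  apply le_antisymm
  · rw [mIdeal, Ideal.span_le]
    rintro _ ⟨i, rfl⟩
    simp [RingHom.mem_ker]
  · intro p hp
    rw [RingHom.mem_ker] at hp
    rw [mIdeal, ← Set.image_univ, mem_ideal_span_X_image]
    intro m hm
    by_contra h
    push_neg at h
    have hm0 : m = 0 := by
      ext i
      exact h i (Set.mem_univ i)
    subst hm0
    exact (mem_support_iff.mp hm) (by simpa [constantCoeff_eq] using hp)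

instance mIdeal_isMaximal (K : Type*) [Field K] (n : ℕ) : (mIdeal K n).IsMaximal := by
  rw [mIdeal_eq_ker]
  exact RingHom.ker_isMaximal_of_surjective _ fun a => ⟨MvPolynomial.C a, by simp⟩

instance mIdeal_isPrime (K : Type*) [Field K] (n : ℕ) : (mIdeal K n).IsPrime :=
  (mIdeal_isMaximal K n).isPrime

/-- The localization `S_m` of the polynomial ring at the irrelevant maximal ideal. -/
noncomputable abbrev SLoc (K : Type*) [Field K] (n : ℕ) : Type _ :=
  Localization.AtPrime (mIdeal K n)

/-- The cover ideal `J(G) = ⋂_{{i,j} ∈ E} (x_i, x_j)`. -/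
noncomputable def coverIdeal (K : Type*) [Field K] {n : ℕ} (G : SimpleGraph (Fin n)) :
    Ideal (MvPolynomial (Fin n) K) :=
  ⨅ e ∈ G.edgeSet, Ideal.span (MvPolynomial.X '' {v : Fin n | v ∈ e})

/-- The arithmetical rank of an ideal: the least `r` such that some `r` elements generate an
ideal with the same radical. -/
noncomputable def ara {R : Type*} [CommRing R] (I : Ideal R) : ℕ :=
  sInf {r : ℕ | ∃ f : Fin r → R, Ideal.radical (Ideal.span (Set.range f)) = Ideal.radical I}

/-- A free parameter pair. -/
def IsFreeParameterPair {n r : ℕ} (G : SimpleGraph (Fin n)) (a b : Fin r → Fin n) : Prop :=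
  Function.Injective a ∧ Function.Injective b ∧
  (∀ i j : Fin r, ¬ G.Adj (a i) (a j)) ∧
  (∀ i j : Fin r, a i ≠ b j) ∧
  (∀ i : Fin r, G.Adj (a i) (b i)) ∧
  (∀ i j : Fin r, G.Adj (a i) (b j) → i ≤ j)

/-- `G` has a free parameter set of cardinality `r`. -/
def HasFreeParameterSet {n : ℕ} (G : SimpleGraph (Fin n)) (r : ℕ) : Prop :=
  ∃ a b : Fin r → Fin n, IsFreeParameterPair G a b

/-- The graphical dimension. -/
noncomputable def gdim {n : ℕ} (G : SimpleGraph (Fin n)) : ℕ :=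
  sSup {r : ℕ | HasFreeParameterSet G r} + 1

/-- `G` has a matching of `r` pairwise disjoint edges. -/
def HasMatchingOfSize {n : ℕ} (G : SimpleGraph (Fin n)) (r : ℕ) : Prop :=
  ∃ e : Fin r → Fin n × Fin n, (∀ i, G.Adj (e i).1 (e i).2) ∧
    ∀ i j : Fin r, i ≠ j →
      (e i).1 ≠ (e j).1 ∧ (e i).1 ≠ (e j).2 ∧ (e i).2 ≠ (e j).1 ∧ (e i).2 ≠ (e j).2

/-- The matching number `ν(G)`. -/
noncomputable def matchingNumber {n : ℕ} (G : SimpleGraph (Fin n)) : ℕ :=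
  sSup {r : ℕ | HasMatchingOfSize G r}

section Covers

variable {n : ℕ} {G : SimpleGraph (Fin n)}

/-- `a` is a `k`-cover of `G`: the weights of the ends of every edge add up to at least `k`. -/
def IsCover (G : SimpleGraph (Fin n)) (k : ℕ) (a : Fin n → ℕ) : Prop :=
  ∀ p q, G.Adj p q → k ≤ a p + a q

/-- `a` is a `k`-cover for which every vertex lies on an edge of weight exactly `k`. -/
def IsBasicCover (G : SimpleGraph (Fin n)) (k : ℕ) (a : Fin n → ℕ) : Prop :=
  IsCover G k a ∧ ∀ p, ∃ q, G.Adj p q ∧ a p + a q = k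

/-- The constraints satisfied with equality by a `k`-cover `a`: the edges of weight `k`, together
with the diagonal pairs `(p, p)` at the vertices `p` of weight zero. -/
def tightSet (G : SimpleGraph (Fin n)) (k : ℕ) (a : Fin n → ℕ) : Set (Fin n × Fin n) :=
  {e | (G.Adj e.1 e.2 ∧ a e.1 + a e.2 = k) ∨ (e.1 = e.2 ∧ a e.1 = 0)}

/-- The values of `a` strictly between `0` and `k / 2`. -/
def lowValues (k : ℕ) (a : Fin n → ℕ) : Finset ℕ :=
  (Finset.univ.image a).filter fun c => 0 < c ∧ 2 * c < k

/-- `τ` is the set of tight constraints of some basic cover of positive degree. -/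
def IsTightType (G : SimpleGraph (Fin n)) (τ : Set (Fin n × Fin n)) : Prop :=
  ∃ k a, 0 < k ∧ IsBasicCover G k a ∧ tightSet G k a = τ

/-- The largest number of low values of a basic cover with tight constraints `τ`. -/
noncomputable def typeRank (G : SimpleGraph (Fin n)) (τ : Set (Fin n × Fin n)) : ℕ :=
  sSup {s | ∃ k a, 0 < k ∧ IsBasicCover G k a ∧ tightSet G k a = τ ∧ s = (lowValues k a).card}

theorem mem_tightSet_of_adj {k : ℕ} {a : Fin n → ℕ} {p q : Fin n} (h : G.Adj p q) :
    (p, q) ∈ tightSet G k a ↔ a p + a q = k := by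
  simp [tightSet, h, h.ne]

theorem mem_tightSet_diag {k : ℕ} {a : Fin n → ℕ} {p : Fin n} :
    (p, p) ∈ tightSet G k a ↔ a p = 0 := by
  simp [tightSet]

theorem mem_lowValues {k : ℕ} {a : Fin n → ℕ} {c : ℕ} :
    c ∈ lowValues k a ↔ (∃ p, a p = c) ∧ 0 < c ∧ 2 * c < k := by
  simp [lowValues]

theorem IsCover.add {k l : ℕ} {a b : Fin n → ℕ} (ha : IsCover G k a) (hb : IsCover G l b) :
    IsCover G (k + l) (a + b) := by
  intro p q h
  have := ha p q h
  have := hb p q h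
  simp only [Pi.add_apply]
  omega

theorem IsCover.nsmul {k : ℕ} {a : Fin n → ℕ} (ha : IsCover G k a) (N : ℕ) :
    IsCover G (N * k) (N • a) := by
  intro p q h
  simpa [mul_add] using Nat.mul_le_mul_left N (ha p q h)

theorem IsBasicCover.apply_le {k : ℕ} {a : Fin n → ℕ} (ha : IsBasicCover G k a) (p : Fin n) :
    a p ≤ k := by
  obtain ⟨q, -, h⟩ := ha.2 p
  omega

theorem IsBasicCover.nsmul {k : ℕ} {a : Fin n → ℕ} (ha : IsBasicCover G k a) (N : ℕ) :
    IsBasicCover G (N * k) (N • a) := by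
  refine ⟨ha.1.nsmul N, fun p => ?_⟩
  obtain ⟨q, hpq, h⟩ := ha.2 p
  exact ⟨q, hpq, by simp [← h, mul_add]⟩

theorem tightSet_add {k l : ℕ} {a b : Fin n → ℕ} (ha : IsCover G k a) (hb : IsCover G l b) :
    tightSet G (k + l) (a + b) = tightSet G k a ∩ tightSet G l b := by
  ext ⟨p, q⟩
  by_cases h : G.Adj p q
  · have := ha p q h
    have := hb p q h
    simp only [Set.mem_inter_iff, mem_tightSet_of_adj h, Pi.add_apply]
    omega
  · simp only [tightSet, Set.mem_inter_iff, Set.mem_ofPred_eq, h, false_and, false_or,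
      Pi.add_apply]
    omega

theorem tightSet_nsmul {k : ℕ} {a : Fin n → ℕ} {N : ℕ} (hN : 0 < N) :
    tightSet G (N * k) (N • a) = tightSet G k a := by
  ext ⟨p, q⟩
  simp [tightSet, ← mul_add, hN.ne']

/-- The low values of a basic cover yield a free parameter set, ordered by decreasing value. -/
theorem IsBasicCover.hasFreeParameterSet {k : ℕ} {a : Fin n → ℕ} (ha : IsBasicCover G k a) :
    HasFreeParameterSet G (lowValues k a).card := by
  set e := (lowValues k a).orderEmbOfFin rfl
  have he (i) : e i ∈ lowValues k a := Finset.orderEmbOfFin_mem _ rfl i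
  have hv (i) : ∃ p, a p = e (Fin.rev i) := (mem_lowValues.1 (he _)).1
  choose A hA using hv
  choose t ht hk using ha.2
  have hlow (i) : 0 < a (A i) ∧ 2 * a (A i) < k := by
    rw [hA]
    exact (mem_lowValues.1 (he _)).2
  have hinj {i j} (h : a (A i) = a (A j)) : i = j := by
    rw [hA, hA] at h
    exact Fin.rev_injective (e.injective h)
  refine ⟨A, fun i => t (A i), fun i j h => hinj (congrArg a h), fun i j h => hinj ?_, ?_, ?_,
    fun i => ht _, ?_⟩
  · have := hk (A i)
    have := hk (A j)
    have : a (t (A i)) = a (t (A j)) := congrArg a h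
    omega
  · intro i j h
    have := ha.1 _ _ h
    have := hlow i
    have := hlow j
    omega
  · intro i j h
    have : a (A i) = a (t (A j)) := congrArg a h
    have := hk (A j)
    have := hlow i
    have := hlow j
    omega
  · intro i j h
    have : k ≤ a (A i) + a (t (A j)) := ha.1 _ _ h
    have := hk (A j)
    have hle : a (A j) ≤ a (A i) := by omega
    rw [hA, hA, e.le_iff_le, Fin.rev_le_rev] at hle
    exact hle

theorem HasFreeParameterSet.hasMatchingOfSize {r : ℕ} (h : HasFreeParameterSet G r) :
    HasMatchingOfSize G r := by
  obtain ⟨a, b, ha, hb, -, hab, hadj, -⟩ := h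
  exact ⟨fun i => (a i, b i), hadj, fun i j hij =>
    ⟨fun h => hij (ha h), hab i j, fun h => hab j i h.symm, fun h => hij (hb h)⟩⟩

theorem HasMatchingOfSize.le {r : ℕ} (h : HasMatchingOfSize G r) : r ≤ n := by
  obtain ⟨e, -, h⟩ := h
  have hinj : Function.Injective fun i => (e i).1 := by
    intro i j hij
    by_contra hne
    exact (h i j hne).1 hij
  simpa using Fintype.card_le_of_injective _ hinj

theorem bddAbove_hasMatchingOfSize : BddAbove {r | HasMatchingOfSize G r} :=
  ⟨n, fun _ h => h.le⟩

theorem bddAbove_hasFreeParameterSet : BddAbove {r | HasFreeParameterSet G r} :=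
  ⟨n, fun _ h => h.hasMatchingOfSize.le⟩

theorem gdim_le_matchingNumber_add_one : gdim G ≤ matchingNumber G + 1 := by
  refine Nat.add_le_add_right ?_ 1
  refine csSup_le' fun r hr => ?_
  exact le_csSup bddAbove_hasMatchingOfSize hr.hasMatchingOfSize

theorem bddAbove_typeRank (τ : Set (Fin n × Fin n)) :
    BddAbove {s | ∃ k a, 0 < k ∧ IsBasicCover G k a ∧ tightSet G k a = τ ∧
      s = (lowValues k a).card} := by
  refine ⟨n, ?_⟩
  rintro _ ⟨k, a, -, ha, -, rfl⟩
  exact ha.hasFreeParameterSet.hasMatchingOfSize.le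

theorem IsBasicCover.card_lowValues_le_typeRank {k : ℕ} {a : Fin n → ℕ} (hk : 0 < k)
    (ha : IsBasicCover G k a) : (lowValues k a).card ≤ typeRank G (tightSet G k a) :=
  le_csSup (bddAbove_typeRank _) ⟨k, a, hk, ha, rfl, rfl⟩

theorem IsTightType.exists_card_eq_typeRank {τ : Set (Fin n × Fin n)} (h : IsTightType G τ) :
    ∃ k a, 0 < k ∧ IsBasicCover G k a ∧ tightSet G k a = τ ∧
      typeRank G τ = (lowValues k a).card := by
  obtain ⟨k, a, hk, ha, hτ⟩ := h
  exact Nat.sSup_mem (s := {s | ∃ k a, 0 < k ∧ IsBasicCover G k a ∧ tightSet G k a = τ ∧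
    s = (lowValues k a).card}) ⟨_, k, a, hk, ha, hτ, rfl⟩ (bddAbove_typeRank τ)

theorem IsTightType.typeRank_lt_gdim {τ : Set (Fin n × Fin n)} (h : IsTightType G τ) :
    typeRank G τ < gdim G := by
  obtain ⟨k, a, -, ha, -, hr⟩ := h.exists_card_eq_typeRank
  rw [hr]
  exact Nat.lt_succ_of_le (le_csSup bddAbove_hasFreeParameterSet ha.hasFreeParameterSet)

/-- If `b` satisfies strictly fewer constraints with equality than `a`, then adding `b` to a large
multiple of `a` creates a new low value. -/
theorem card_lowValues_lt {k l : ℕ} {a b : Fin n → ℕ} (hk : 0 < k)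
    (hb : IsBasicCover G l b) (h : tightSet G l b ⊂ tightSet G k a) :
    (lowValues k a).card <
      (lowValues ((2 * l + 1) * k + l) ((2 * l + 1) • a + b)).card := by
  obtain ⟨hsub, hne⟩ := h
  have hble := hb.apply_le
  have hnbr (q : Fin n) : ∃ r, b q + b r = l ∧ a q + a r = k := by
    obtain ⟨r, hqr, hr⟩ := hb.2 q
    exact ⟨r, hr, (mem_tightSet_of_adj hqr).1 (hsub ((mem_tightSet_of_adj hqr).2 hr))⟩
  have hdiv (p : Fin n) : ((2 * l + 1) * a p + b p) / (2 * l + 1) = a p := by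
    rw [Nat.mul_add_div (by omega), Nat.div_eq_of_lt (by have := hble p; omega), add_zero]
  set c := (2 * l + 1) • a + b with hc
  have hcp (p : Fin n) : c p = (2 * l + 1) * a p + b p := by simp [hc]
  have hlow (p : Fin n) (h0 : 0 < a p ∨ 0 < b p) (h2 : 2 * a p < k) :
      c p ∈ lowValues ((2 * l + 1) * k + l) c := by
    refine mem_lowValues.2 ⟨⟨p, rfl⟩, ?_, ?_⟩
    · rw [hcp]
      rcases h0 with h0 | h0 <;> positivity
    · rw [hcp]
      have := hble p
      have := Nat.mul_le_mul_left (2 * l + 1) (show 2 * a p + 1 ≤ k by omega)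
      nlinarith
  by_contra! hcard
  have himage : lowValues k a ⊆
      (lowValues ((2 * l + 1) * k + l) c).image (· / (2 * l + 1)) := by
    intro x hx
    obtain ⟨⟨p, rfl⟩, h0, h2⟩ := mem_lowValues.1 hx
    exact Finset.mem_image.2 ⟨c p, hlow p (.inl h0) h2, by rw [hcp, hdiv]⟩
  have heq := Finset.eq_of_subset_of_card_le himage (Finset.card_image_le.trans hcard)
  have hinj : Set.InjOn (· / (2 * l + 1)) (lowValues ((2 * l + 1) * k + l) c : Set ℕ) := by
    refine Finset.card_image_iff.1 (le_antisymm Finset.card_image_le ?_)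
    rw [← heq]
    exact hcard
  have hmem (p : Fin n) (hp : c p ∈ lowValues ((2 * l + 1) * k + l) c) :
      0 < a p ∧ 2 * a p < k := by
    have : a p ∈ lowValues k a := by
      rw [heq]
      exact Finset.mem_image.2 ⟨c p, hp, by rw [hcp, hdiv]⟩
    exact (mem_lowValues.1 this).2
  have hzero (p : Fin n) (h0 : a p = 0) : b p = 0 := by
    by_contra hbp
    have := hmem p (hlow p (.inr (by omega)) (by omega))
    omega
  have hhalf (q : Fin n) (hq : 2 * a q = k) : 2 * b q ≤ l := by
    by_contra hbq
    obtain ⟨r, hr, har⟩ := hnbr q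
    have hr2 : 2 * a r = k := by omega
    have hpos : 0 < c r := by
      rw [hcp]
      exact Nat.add_pos_left (Nat.mul_pos (by omega) (by omega)) _
    have hlt : 2 * c r < (2 * l + 1) * k + l := by
      rw [hcp, ← hr2]
      nlinarith
    have := hmem r (mem_lowValues.2 ⟨⟨r, rfl⟩, hpos, hlt⟩)
    omega
  have hedge (p q : Fin n) (hpq : a p + a q = k) (hle : a p ≤ a q) : b p + b q ≤ l := by
    have := hble q
    rcases Nat.eq_zero_or_pos (a p) with h0 | h0
    · have := hzero p h0
      omega
    rcases eq_or_lt_of_le hle with he | hlt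
    · have := hhalf p (by omega)
      have := hhalf q (by omega)
      omega
    · obtain ⟨r, hr, har⟩ := hnbr q
      have harp : a r = a p := by omega
      have := hinj (hlow p (.inl h0) (by omega)) (hlow r (.inl (by omega)) (by omega))
        (by rw [hcp, hcp]; exact (hdiv p).trans (harp.symm.trans (hdiv r).symm))
      rw [hcp, hcp, harp] at this
      omega
  refine hne ?_
  rintro ⟨p, q⟩ (⟨hadj, hpq⟩ | ⟨rfl : p = q, hp⟩)
  · refine (mem_tightSet_of_adj hadj).2 (le_antisymm ?_ (hb.1 p q hadj))
    simp only at hpq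
    rcases le_total (a p) (a q) with hle | hle
    · exact hedge p q hpq hle
    · rw [add_comm]
      exact hedge q p (by omega) hle
  · exact mem_tightSet_diag.2 (hzero p hp)

theorem IsTightType.typeRank_lt {σ τ : Set (Fin n × Fin n)} (hσ : IsTightType G σ)
    (hτ : IsTightType G τ) (h : τ ⊂ σ) : typeRank G σ < typeRank G τ := by
  obtain ⟨k, a, hk, ha, rfl, hr⟩ := hσ.exists_card_eq_typeRank
  obtain ⟨l, b, hl, hb, rfl⟩ := hτ
  rw [hr]
  refine (card_lowValues_lt hk hb h).trans_le ?_
  have hty : tightSet G ((2 * l + 1) * k + l) ((2 * l + 1) • a + b) = tightSet G l b := by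
    rw [tightSet_add (ha.1.nsmul _) hb.1, tightSet_nsmul (by omega),
      Set.inter_eq_right.2 h.subset]
  rw [← hty]
  refine IsBasicCover.card_lowValues_le_typeRank (by positivity)
    ⟨(ha.1.nsmul _).add hb.1, fun p => ?_⟩
  obtain ⟨q, hpq, hq⟩ := hb.2 p
  refine ⟨q, hpq, ?_⟩
  rwa [← mem_tightSet_of_adj hpq, hty, mem_tightSet_of_adj hpq]

/-- All tight types are realized by basic covers of one common even degree. -/
theorem exists_common_degree (G : SimpleGraph (Fin n)) :
    ∃ e, 0 < e ∧ ∃ A : Set (Fin n × Fin n) → Fin n → ℕ, ∀ τ, IsTightType G τ →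
      IsBasicCover G (2 * e) (A τ) ∧ tightSet G (2 * e) (A τ) = τ := by
  classical
  have h (τ : Set (Fin n × Fin n)) : ∃ k : ℕ, ∃ a : Fin n → ℕ, 0 < k ∧ (IsTightType G τ →
      IsBasicCover G k a ∧ tightSet G k a = τ) := by
    by_cases hτ : IsTightType G τ
    · obtain ⟨k, a, hk, ha⟩ := hτ
      exact ⟨k, a, hk, fun _ => ha⟩
    · exact ⟨1, 0, one_pos, fun h => absurd h hτ⟩
  choose k a hk ha using h
  have he : 0 < ∏ τ, k τ := Finset.prod_pos fun τ _ => hk τ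
  refine ⟨∏ τ, k τ, he, fun τ => (2 * ∏ σ ∈ Finset.univ.erase τ, k σ) • a τ, fun τ hτ => ?_⟩
  have hdeg : 2 * ∏ σ, k σ = (2 * ∏ σ ∈ Finset.univ.erase τ, k σ) * k τ := by
    rw [mul_assoc, Finset.prod_erase_mul _ _ (Finset.mem_univ τ)]
  have hpos : 0 < 2 * ∏ σ ∈ Finset.univ.erase τ, k σ :=
    mul_pos two_pos (Finset.prod_pos fun σ _ => hk σ)
  rw [hdeg, tightSet_nsmul hpos]
  exact ⟨(ha τ hτ).1.nsmul _, (ha τ hτ).2⟩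

/-- A cover of positive degree is basic unless the weight of some vertex can be lowered. -/
theorem IsCover.isBasicCover_or_exists_lower (hiso : ∀ v : Fin n, ∃ w, G.Adj v w) {k : ℕ}
    (hk : 0 < k) {a : Fin n → ℕ} (ha : IsCover G k a) :
    IsBasicCover G k a ∨ ∃ p a', IsCover G k a' ∧ a = a' + Pi.single p 1 := by
  by_cases h : ∀ p, 0 < a p → ∃ q, G.Adj p q ∧ a p + a q = k
  · refine .inl ⟨ha, fun p => ?_⟩
    rcases Nat.eq_zero_or_pos (a p) with h0 | h0
    · obtain ⟨q, hpq⟩ := hiso p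
      have := ha p q hpq
      obtain ⟨r, hqr, hr⟩ := h q (by omega)
      exact ⟨q, hpq, by omega⟩
    · exact h p h0
  · push Not at h
    obtain ⟨p, hp, hq⟩ := h
    refine .inr ⟨p, fun i => a i - if i = p then 1 else 0, fun i j hij => ?_, ?_⟩
    · have := ha i j hij
      by_cases hi : i = p
      · subst hi
        have := hq j hij
        simp only [if_true, hij.ne', if_false]
        omega
      · by_cases hj : j = p
        · subst hj
          have := hq i hij.symm
          simp only [if_true, hi, if_false]
          omega
        · simpa [hi, hj] using this
    · ext i
      by_cases hi : i = p
      · subst hi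
        simp
        omega
      · simp [hi]

/-- A cover of degree at least two splits off a `2`-cover with weights at most `2`. -/
theorem IsCover.exists_eq_add {k : ℕ} {a : Fin n → ℕ} (ha : IsCover G (k + 2) a) :
    ∃ c a', IsCover G 2 c ∧ (∀ p, c p ≤ 2) ∧ IsCover G k a' ∧ a = c + a' := by
  set c : Fin n → ℕ := fun p => if a p = 0 then 0 else if a p < k + 2 then 1 else 2 with hc
  have hcp (p : Fin n) : (a p = 0 ∧ c p = 0) ∨ (0 < a p ∧ a p < k + 2 ∧ c p = 1) ∨
      (k + 2 ≤ a p ∧ c p = 2) := by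
    simp only [hc]
    split_ifs <;> omega
  refine ⟨c, fun p => a p - c p, fun p q h => ?_, fun p => ?_, fun p q h => ?_, ?_⟩
  · have := ha p q h
    have := hcp p
    have := hcp q
    omega
  · have := hcp p
    omega
  · have := ha p q h
    have := hcp p
    have := hcp q
    simp only
    omega
  · ext p
    have := hcp p
    simp only [Pi.add_apply]
    omega

/-- A multiple of `b` dominates any basic cover with the same tight constraints. -/
theorem exists_nsmul_eq_add {e L : ℕ} {a b : Fin n → ℕ}
    (hb : IsCover G (2 * L) b) (ha : IsBasicCover G (2 * e) a)
    (h : tightSet G (2 * L) b ⊆ tightSet G (2 * e) a) :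
    ∃ c, IsCover G (2 * (2 * e * L - e)) c ∧ (2 * e) • b = a + c := by
  have hle (p : Fin n) : a p ≤ 2 * e * b p := by
    rcases Nat.eq_zero_or_pos (b p) with h0 | h0
    · have := mem_tightSet_diag.1 (h (mem_tightSet_diag.2 h0))
      omega
    · exact (ha.apply_le p).trans (Nat.le_mul_of_pos_right _ h0)
  refine ⟨fun p => 2 * e * b p - a p, fun p q hpq => ?_, ?_⟩
  · have := hle p
    have := hle q
    have := ha.apply_le p
    have := ha.apply_le q
    rcases eq_or_lt_of_le (hb p q hpq) with heq | hlt
    · have := (mem_tightSet_of_adj hpq).1 (h ((mem_tightSet_of_adj hpq).2 heq.symm))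
      have : 2 * e * b p + 2 * e * b q = 2 * (2 * e * L) := by
        rw [← mul_add, ← heq]
        ring
      simp only
      omega
    · have : 2 * (2 * e * L) + 2 * e ≤ 2 * e * b p + 2 * e * b q := by
        have := Nat.mul_le_mul_left (2 * e) (Nat.succ_le_of_lt hlt)
        rw [Nat.succ_eq_add_one] at this
        linarith
      simp only
      omega
  · ext p
    have := hle p
    simp only [Pi.smul_apply, smul_eq_mul, Pi.add_apply]
    omega

end Covers

section Weights

variable {n : ℕ} {G : SimpleGraph (Fin n)} {Γ : Type*} [LinearOrderedCommGroupWithZero Γ]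

/-- The value of the monomial with exponent vector `a` when the variables have values `w`. -/
def monomialWeight (w : Fin n → Γ) (a : Fin n → ℕ) : Γ :=
  ∏ i, w i ^ a i

theorem monomialWeight_add (w : Fin n → Γ) (a b : Fin n → ℕ) :
    monomialWeight w (a + b) = monomialWeight w a * monomialWeight w b := by
  simp [monomialWeight, pow_add, Finset.prod_mul_distrib]

theorem monomialWeight_nsmul (w : Fin n → Γ) (N : ℕ) (a : Fin n → ℕ) :
    monomialWeight w (N • a) = monomialWeight w a ^ N := by
  simp [monomialWeight, ← Finset.prod_pow, ← pow_mul, mul_comm]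

theorem monomialWeight_single (w : Fin n → Γ) (p : Fin n) :
    monomialWeight w (Pi.single p 1) = w p := by
  rw [monomialWeight, Finset.prod_eq_single p]
  · simp
  · intro q _ hq
    simp [hq]
  · simp

theorem monomialWeight_le_one {w : Fin n → Γ} (hw : ∀ i, w i < 1) (a : Fin n → ℕ) :
    monomialWeight w a ≤ 1 :=
  Finset.prod_le_one' fun i _ => pow_le_one' (hw i).le _

/-- The largest weight `α` of a `2`-cover controls the weights of all covers of even degree. -/
theorem exists_max_weight {w : Fin n → Γ} (hw : ∀ i, w i < 1)
    (h0 : ∀ p q, G.Adj p q → w p ≠ 0 ∨ w q ≠ 0) :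
    ∃ α : Γ, 0 < α ∧ (∃ c, IsCover G 2 c ∧ monomialWeight w c = α) ∧
      ∀ L a, IsCover G (2 * L) a → monomialWeight w a ≤ α ^ L := by
  classical
  let C := (Fintype.piFinset fun _ : Fin n => Finset.range 3).filter (IsCover G 2)
  have hC (c : Fin n → ℕ) : c ∈ C ↔ (∀ p, c p ≤ 2) ∧ IsCover G 2 c := by
    simp [C, Nat.lt_succ_iff]
  let d : Fin n → ℕ := fun p => if w p = 0 then 0 else 2
  have hd : d ∈ C := by
    refine (hC d).2 ⟨fun p => ?_, fun p q h => ?_⟩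
    · simp only [d]
      split_ifs <;> omega
    · have := h0 p q h
      simp only [d]
      split_ifs <;> simp_all
  have hd0 : monomialWeight w d ≠ 0 := by
    refine Finset.prod_ne_zero_iff.2 fun p _ => ?_
    by_cases hp : w p = 0 <;> simp [d, hp]
  obtain ⟨c, hc, hmax⟩ := C.exists_max_image (monomialWeight w) ⟨d, hd⟩
  refine ⟨monomialWeight w c, (zero_lt_iff.2 hd0).trans_le (hmax d hd),
    ⟨c, ((hC c).1 hc).2, rfl⟩, fun L => ?_⟩
  induction L with
  | zero =>
    intro a _
    simpa using monomialWeight_le_one hw a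
  | succ L ih =>
    intro a ha
    obtain ⟨c', a', hc', hle, ha', rfl⟩ := IsCover.exists_eq_add (k := 2 * L) ha
    rw [monomialWeight_add, pow_succ']
    exact mul_le_mul' (hmax c' ((hC c').2 ⟨hle, hc'⟩)) (ih a' ha')

theorem isBasicCover_of_monomialWeight_eq (hiso : ∀ v : Fin n, ∃ w, G.Adj v w)
    {w : Fin n → Γ} (hw : ∀ i, w i < 1) {α : Γ} (hα : 0 < α)
    (hmax : ∀ L a, IsCover G (2 * L) a → monomialWeight w a ≤ α ^ L) {L : ℕ} (hL : 0 < L)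
    {a : Fin n → ℕ} (ha : IsCover G (2 * L) a) (hwa : monomialWeight w a = α ^ L) :
    IsBasicCover G (2 * L) a := by
  rcases ha.isBasicCover_or_exists_lower hiso (by omega) with h | ⟨p, a', ha', rfl⟩
  · exact h
  · rw [monomialWeight_add, monomialWeight_single] at hwa
    have h1 := hmax L a' ha'
    have h2 : α ^ L * w p < α ^ L := mul_lt_of_lt_one_right (pow_pos hα L) (hw p)
    exact absurd hwa ((mul_le_mul_left h1 _).trans_lt h2).ne

/-- Among the chosen monomials `A σ` of one suitable rank, exactly one has the maximal weight. -/
theorem exists_unique_dominant_type (hiso : ∀ v : Fin n, ∃ w, G.Adj v w)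
    {w : Fin n → Γ} (hw : ∀ i, w i < 1) (h0 : ∀ p q, G.Adj p q → w p ≠ 0 ∨ w q ≠ 0)
    {e : ℕ} (he : 0 < e) {A : Set (Fin n × Fin n) → Fin n → ℕ}
    (hA : ∀ τ, IsTightType G τ →
      IsBasicCover G (2 * e) (A τ) ∧ tightSet G (2 * e) (A τ) = τ) :
    ∃ τ, IsTightType G τ ∧ monomialWeight w (A τ) ≠ 0 ∧
      ∀ σ, IsTightType G σ → typeRank G σ = typeRank G τ → σ ≠ τ →
        monomialWeight w (A σ) < monomialWeight w (A τ) := by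
  obtain ⟨α, hα, ⟨c, hc, hcα⟩, hmax⟩ := exists_max_weight hw h0
  let O : Set (Set (Fin n × Fin n)) := {τ | ∃ L a, 0 < L ∧ IsCover G (2 * L) a ∧
    monomialWeight w a = α ^ L ∧ tightSet G (2 * L) a = τ}
  have hO : O.Nonempty := ⟨_, 1, c, one_pos, hc, by simpa using hcα, rfl⟩
  obtain ⟨τ, hτ⟩ := (Set.toFinite O).exists_minimal hO
  obtain ⟨L, b, hL, hb, hbα, rfl⟩ := hτ.prop
  have hbasic := isBasicCover_of_monomialWeight_eq hiso hw hα hmax hL hb hbα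
  have htype : IsTightType G (tightSet G (2 * L) b) := ⟨2 * L, b, by omega, hbasic, rfl⟩
  obtain ⟨hAb, hAt⟩ := hA _ htype
  have hAα : monomialWeight w (A (tightSet G (2 * L) b)) = α ^ e := by
    obtain ⟨d, hd, hsum⟩ := exists_nsmul_eq_add hb hAb hAt.ge
    have heL : e ≤ 2 * e * L := by nlinarith
    have hprod := congrArg (monomialWeight w) hsum
    rw [monomialWeight_nsmul, monomialWeight_add, hbα, ← pow_mul] at hprod
    refine le_antisymm (hmax e _ hAb.1) ?_
    have hpos : 0 < α ^ (2 * e * L - e) := pow_pos hα _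
    refine le_of_mul_le_mul_right ?_ hpos
    calc α ^ e * α ^ (2 * e * L - e) = α ^ (L * (2 * e)) := by
          rw [← pow_add, Nat.add_sub_cancel' heL, mul_comm L]
      _ = _ := hprod
      _ ≤ _ := mul_le_mul_right (hmax _ d hd) _
  refine ⟨_, htype, by rw [hAα]; exact (pow_pos hα e).ne', fun σ hσ hrank hne => ?_⟩
  obtain ⟨hσb, hσt⟩ := hA σ hσ
  rw [hAα]
  refine (hmax e _ hσb.1).lt_of_ne fun hσα => ?_
  have hmem : tightSet G (2 * L) b ∩ σ ∈ O := by
    refine ⟨L + e, b + A σ, by omega, ?_, ?_, ?_⟩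
    · rw [mul_add]
      exact hb.add hσb.1
    · rw [monomialWeight_add, hbα, hσα, pow_add]
    · rw [mul_add, tightSet_add hb hσb.1, hσt]
  have hsub : tightSet G (2 * L) b ⊆ σ :=
    (hτ.le_of_le hmem Set.inter_subset_left).trans Set.inter_subset_right
  exact (hσ.typeRank_lt htype (hsub.ssubset_of_ne hne.symm)).ne hrank

end Weights

theorem ara_le {R : Type*} [CommRing R] {I : Ideal R} {r : ℕ} (f : Fin r → R)
    (h : Ideal.radical (Ideal.span (Set.range f)) = Ideal.radical I) : ara I ≤ r :=
  Nat.sInf_le ⟨f, h⟩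

theorem prod_X_pow_mem_coverIdeal (K : Type*) [Field K] {n : ℕ} {G : SimpleGraph (Fin n)} {k : ℕ}
    (hk : 0 < k) {a : Fin n → ℕ} (ha : IsCover G k a) :
    (∏ i, X i ^ a i : MvPolynomial (Fin n) K) ∈ coverIdeal K G := by
  simp only [coverIdeal, Ideal.mem_iInf]
  intro e he
  induction e using Sym2.ind with
  | _ p q =>
    have hpq := ha p q he
    have hmem (v : Fin n) (hv : v ∈ s(p, q)) (h : a v ≠ 0) :
        (∏ i, X i ^ a i : MvPolynomial (Fin n) K) ∈
          Ideal.span (X '' {v : Fin n | v ∈ s(p, q)}) :=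
      Ideal.mem_of_dvd _ ((dvd_pow_self _ h).trans (Finset.dvd_prod_of_mem _ (Finset.mem_univ v)))
        (Ideal.subset_span ⟨v, hv, rfl⟩)
    rcases Nat.eq_zero_or_pos (a p) with h | h
    · exact hmem q (by simp) (by omega)
    · exact hmem p (by simp) h.ne'

theorem coverIdeal_le_of_adj (K : Type*) [Field K] {n : ℕ} {G : SimpleGraph (Fin n)} {p q : Fin n}
    (h : G.Adj p q) {I : Ideal (MvPolynomial (Fin n) K)} (hp : X p ∈ I) (hq : X q ∈ I) :
    coverIdeal K G ≤ I := by
  refine (iInf₂_le s(p, q) h).trans (Ideal.span_le.2 ?_)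
  rintro _ ⟨v, hv, rfl⟩
  rcases Sym2.mem_iff.1 hv with rfl | rfl
  · exact hp
  · exact hq

/-- A ring homomorphism from a local ring to a field carries a valuation of the field that is less
than one on the image of the maximal ideal. -/
theorem exists_valuation_lt_one {R F : Type*} [CommRing R] [IsLocalRing R] [Field F]
    (f : R →+* F) :
    ∃ A : ValuationSubring F, ∀ x ∈ IsLocalRing.maximalIdeal R, A.valuation (f x) < 1 := by
  obtain ⟨A, h, hloc⟩ := IsLocalRing.exists_factor_valuationRing f
  refine ⟨A, fun x hx => ?_⟩
  refine (A.valuation_lt_one_iff ⟨f x, h x⟩).1 ?_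
  rw [IsLocalRing.mem_maximalIdeal, mem_nonunits_iff] at hx ⊢
  exact fun hu => hx (hloc.map_nonunit x hu)

theorem ara_coverIdeal_map_le (K : Type*) [Field K] {n : ℕ}
    (G : SimpleGraph (Fin n)) (hiso : ∀ v : Fin n, ∃ w, G.Adj v w) :
    ara ((coverIdeal K G).map (algebraMap (MvPolynomial (Fin n) K) (SLoc K n))) ≤ gdim G := by
  classical
  obtain ⟨e, he, A, hA⟩ := exists_common_degree G
  let φ := algebraMap (MvPolynomial (Fin n) K) (SLoc K n)
  let T (i : ℕ) : Finset (Set (Fin n × Fin n)) :=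
    Finset.univ.filter fun τ => IsTightType G τ ∧ typeRank G τ = i
  let mon (τ : Set (Fin n × Fin n)) : SLoc K n := φ (∏ i, X i ^ A τ i)
  let f : Fin (gdim G) → SLoc K n := fun i => ∑ τ ∈ T i, mon τ
  refine ara_le f (le_antisymm (Ideal.radical_mono ?_) ?_)
  · rw [Ideal.span_le]
    rintro _ ⟨i, rfl⟩
    refine Ideal.sum_mem _ fun τ hτ => Ideal.mem_map_of_mem _ ?_
    have hτ := (Finset.mem_filter.1 hτ).2.1
    exact prod_X_pow_mem_coverIdeal K (by omega) (hA τ hτ).1.1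
  · rw [Ideal.radical_le_radical_iff, Ideal.radical_eq_sInf]
    refine le_sInf fun Q ⟨hfQ, hQ⟩ => ?_
    by_contra hJ
    let ψ := (algebraMap (SLoc K n ⧸ Q) (FractionRing (SLoc K n ⧸ Q))).comp (Ideal.Quotient.mk Q)
    have hψ (x : SLoc K n) : ψ x = 0 ↔ x ∈ Q := by
      simp [ψ, Ideal.Quotient.eq_zero_iff_mem]
    obtain ⟨B, hB⟩ := exists_valuation_lt_one ψ
    let w (i : Fin n) := B.valuation (ψ (φ (X i)))
    have hw (i : Fin n) : w i < 1 := by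
      refine hB _ ?_
      rw [← Localization.AtPrime.map_eq_maximalIdeal]
      exact Ideal.mem_map_of_mem _ (Ideal.subset_span ⟨i, rfl⟩)
    have hmon (τ : Set (Fin n × Fin n)) : B.valuation (ψ (mon τ)) = monomialWeight w (A τ) := by
      simp [mon, monomialWeight, w]
    have h0 (p q : Fin n) (hpq : G.Adj p q) : w p ≠ 0 ∨ w q ≠ 0 := by
      by_contra! h
      refine hJ (Ideal.map_le_iff_le_comap.2 (coverIdeal_le_of_adj K hpq ?_ ?_))
      · exact (hψ _).1 ((map_eq_zero _).1 h.1)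
      · exact (hψ _).1 ((map_eq_zero _).1 h.2)
    obtain ⟨τ, hτ, hτ0, hlt⟩ := exists_unique_dominant_type hiso hw h0 he hA
    have hτT : τ ∈ T (typeRank G τ) := by simp [T, hτ]
    have hsum : B.valuation (∑ σ ∈ (T (typeRank G τ)).erase τ, ψ (mon σ)) <
        B.valuation (ψ (mon τ)) := by
      refine Valuation.map_sum_lt _ (by rwa [hmon]) fun σ hσ => ?_
      simp only [T, Finset.mem_erase, Finset.mem_filter, Finset.mem_univ, true_and] at hσ
      rw [hmon, hmon]
      exact hlt σ hσ.2.1 hσ.2.2 hσ.1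
    have hval : B.valuation (ψ (f ⟨typeRank G τ, hτ.typeRank_lt_gdim⟩)) =
        monomialWeight w (A τ) := by
      simp only [f, map_sum]
      rw [← Finset.add_sum_erase _ _ hτT, Valuation.map_add_eq_of_lt_left _ hsum, hmon]
    have hzero := (hψ _).2 (hfQ (Ideal.subset_span ⟨⟨_, hτ.typeRank_lt_gdim⟩, rfl⟩))
    rw [hzero, map_zero] at hval
    exact hτ0 hval.symm

/-- Let `K` be an infinite field and `G` a graph. Then
`ara(J(G)S_m) ≤ gdim(G)`; in particular `ara(J(G)S_m) ≤ ν(G) + 1`. -/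
theorem ara_coverIdeal_le_gdim (K : Type*) [Field K] [Infinite K] {n : ℕ}
    (G : SimpleGraph (Fin n)) (hiso : ∀ v : Fin n, ∃ w, G.Adj v w) :
    ara ((coverIdeal K G).map (algebraMap (MvPolynomial (Fin n) K) (SLoc K n))) ≤ gdim G ∧
    ara ((coverIdeal K G).map (algebraMap (MvPolynomial (Fin n) K) (SLoc K n))) ≤
      matchingNumber G + 1 := by
  have h := ara_coverIdeal_map_le K G hiso
  exact ⟨h, h.trans gdim_le_matchingNumber_add_one⟩
end

section
/- Let K be an infinite field and I ⊆ S = K[x_1,…,x_n] a square-free monomial ideal of pure codimension 2 (every minimal prime of I has height 2), and let d be the minimum degree of a nonzero monomial in I. Then ara(I S_m) ≤ min{d+1, n−d+1}. -/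
open MvPolynomial

section TwoCovers

variable {ι : Type*}

/-- A `2`-cover of a graph: a weighting of the vertices by `0, 1, 2` such that the two ends of every
edge have total weight at least `2`. -/
def IsTwoCover (G : SimpleGraph ι) (c : ι → ℕ) : Prop :=
  (∀ i, c i ≤ 2) ∧ ∀ i j, G.Adj i j → 2 ≤ c i + c j

/-- Every vertex of positive weight lies on an edge of total weight at most `2`; for a `2`-cover
this says that no weight can be lowered. -/
def IsBasic (G : SimpleGraph ι) (c : ι → ℕ) : Prop :=
  ∀ i, c i ≠ 0 → ∃ j, G.Adj i j ∧ c i + c j ≤ 2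

/-- The more balanced one of the two `2`-covers into which a sum of two `2`-covers is
redistributed. -/
def innerPart (c c' : ι → ℕ) (i : ι) : ℕ :=
  if c i + c' i = 0 then 0 else if c i + c' i = 4 then 2 else 1

/-- The more extreme one of the two `2`-covers into which a sum of two `2`-covers is
redistributed. -/
def outerPart (c c' : ι → ℕ) (i : ι) : ℕ :=
  if c i + c' i ≤ 1 then 0 else if c i + c' i = 2 then 1 else 2

variable {G : SimpleGraph ι} {c c' : ι → ℕ}

theorem IsTwoCover.innerPart_add_outerPart (hc : IsTwoCover G c) (hc' : IsTwoCover G c') (i : ι) :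
    innerPart c c' i + outerPart c c' i = c i + c' i := by
  have h1 := hc.1 i
  have h2 := hc'.1 i
  unfold innerPart outerPart
  split_ifs <;> omega

theorem IsTwoCover.innerPart (hc : IsTwoCover G c) (hc' : IsTwoCover G c') :
    IsTwoCover G (innerPart c c') := by
  refine ⟨fun i => by unfold _root_.innerPart; split_ifs <;> omega, fun i j hij => ?_⟩
  have h1 := hc.1 i
  have h2 := hc'.1 i
  have h3 := hc.1 j
  have h4 := hc'.1 j
  have h5 := hc.2 i j hij
  have h6 := hc'.2 i j hij
  unfold _root_.innerPart
  split_ifs <;> omega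

theorem IsTwoCover.outerPart (hc : IsTwoCover G c) (hc' : IsTwoCover G c') :
    IsTwoCover G (outerPart c c') := by
  refine ⟨fun i => by unfold _root_.outerPart; split_ifs <;> omega, fun i j hij => ?_⟩
  have h1 := hc.1 i
  have h2 := hc'.1 i
  have h3 := hc.1 j
  have h4 := hc'.1 j
  have h5 := hc.2 i j hij
  have h6 := hc'.2 i j hij
  unfold _root_.outerPart
  split_ifs <;> omega

/-- A vertex weight of a basic `2`-cover is determined by the weights of the neighbours. -/
theorem IsBasic.le_of_eq_on_neighbors (hb : IsBasic G c) (hc' : IsTwoCover G c') {i : ι}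
    (h : ∀ j, G.Adj i j → c j = c' j) : c i ≤ c' i := by
  by_cases h0 : c i = 0
  · omega
  · obtain ⟨j, hij, hj⟩ := hb i h0
    have h1 := h j hij
    have h2 := hc'.2 i j hij
    omega

/-- A basic `2`-cover is determined by the set of its vertices of weight `0`. -/
theorem IsBasic.eq_of_zero_iff (hc : IsTwoCover G c) (hb : IsBasic G c) (hc' : IsTwoCover G c')
    (hb' : IsBasic G c') (h : ∀ i, c i = 0 ↔ c' i = 0) : c = c' := by
  have two_le : ∀ {a b : ι → ℕ}, IsTwoCover G a → IsBasic G a → IsTwoCover G b →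
      (∀ i, a i = 0 ↔ b i = 0) → ∀ i, a i = 2 → 2 ≤ b i := by
    intro a b ha hba hb hab i hi
    obtain ⟨j, hij, hj⟩ := hba i (by omega)
    have h1 := (hab j).1 (by omega)
    have h2 := hb.2 i j hij
    omega
  funext i
  have h1 := two_le hc hb hc' h i
  have h2 := two_le hc' hb' hc (fun i => (h i).symm) i
  have h3 := hc.1 i
  have h4 := hc'.1 i
  have h5 := h i
  omega

/-- A basic `2`-cover is determined by its restriction to a vertex cover. -/
theorem IsBasic.eq_of_eq_on_cover (hc : IsTwoCover G c) (hb : IsBasic G c) (hc' : IsTwoCover G c')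
    (hb' : IsBasic G c') {D : Finset ι} (hD : ∀ i j, G.Adj i j → i ∈ D ∨ j ∈ D)
    (h : ∀ i ∈ D, c i = c' i) : c = c' := by
  funext i
  by_cases hi : i ∈ D
  · exact h i hi
  · have hn : ∀ j, G.Adj i j → c j = c' j := fun j hij => h j ((hD i j hij).resolve_left hi)
    exact le_antisymm (hb.le_of_eq_on_neighbors hc' hn)
      (hb'.le_of_eq_on_neighbors hc fun j hij => (hn j hij).symm)

/-- A `2`-cover that is not basic dominates another one, smaller by one at a single vertex. -/
theorem IsTwoCover.exists_lower [DecidableEq ι] (hc : IsTwoCover G c) (hb : ¬ IsBasic G c) :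
    ∃ i c', IsTwoCover G c' ∧ c = c' + Pi.single i 1 := by
  unfold IsBasic at hb
  push Not at hb
  obtain ⟨i, hi, h⟩ := hb
  refine ⟨i, Function.update c i (c i - 1), ⟨fun j => ?_, fun j k hjk => ?_⟩, ?_⟩
  · have h1 := hc.1 j
    rcases eq_or_ne j i with rfl | hj
    · rw [Function.update_self]; omega
    · rwa [Function.update_of_ne hj]
  · have h2 := hc.2 j k hjk
    rcases eq_or_ne j i with rfl | hj
    · have h3 := h k hjk
      rw [Function.update_self, Function.update_of_ne hjk.ne']; omega
    · rcases eq_or_ne k i with rfl | hk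
      · have h3 := h j hjk.symm
        rw [Function.update_self, Function.update_of_ne hj]; omega
      · rwa [Function.update_of_ne hj, Function.update_of_ne hk]
  · funext j
    rcases eq_or_ne j i with rfl | hj
    · simp only [Pi.add_apply, Function.update_self, Pi.single_eq_same]; omega
    · simp [hj]

variable (G) in
/-- A rank function separating incomparable basic `2`-covers: the inner part of two distinct basic
`2`-covers of the same rank has smaller rank. -/
def IsRank (φ : (ι → ℕ) → ℕ) : Prop :=
  ∀ c c', IsTwoCover G c → IsBasic G c → IsTwoCover G c' → IsBasic G c' → c ≠ c' →
    φ c = φ c' → φ (innerPart c c') < φ c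

variable (G) in
theorem isRank_card_zeros [Fintype ι] : IsRank G fun c => (Finset.univ.filter (c · = 0)).card := by
  intro c c' hc hb hc' hb' hne heq
  have key : ∀ i, innerPart c c' i = 0 ↔ c i = 0 ∧ c' i = 0 := by
    intro i
    have h1 := hc.1 i
    unfold innerPart; split_ifs <;> grind
  refine Finset.card_lt_card ⟨fun i => ?_, fun hsub => hne ?_⟩
  · simp only [Finset.mem_filter, Finset.mem_univ, true_and, key]
    exact fun h => h.1
  · have hsub' : Finset.univ.filter (c · = 0) ⊆ Finset.univ.filter (c' · = 0) := by
      intro i hi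
      have := hsub hi
      simp only [Finset.mem_filter, Finset.mem_univ, true_and, key] at this ⊢
      exact this.2
    have he := Finset.eq_of_subset_of_card_le hsub' heq.ge
    refine hb.eq_of_zero_iff hc hc' hb' fun i => ?_
    simpa using Finset.ext_iff.1 he i

theorem isRank_card_ne_one {D : Finset ι} (hD : ∀ i j, G.Adj i j → i ∈ D ∨ j ∈ D) :
    IsRank G fun c => (D.filter (c · ≠ 1)).card := by
  intro c c' hc hb hc' hb' hne heq
  have key : ∀ i, innerPart c c' i ≠ 1 ↔ c i ≠ 1 ∧ c i = c' i := by
    intro i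
    have h1 := hc.1 i
    have h2 := hc'.1 i
    unfold innerPart; split_ifs <;> omega
  refine Finset.card_lt_card ⟨fun i => ?_, fun hsub => hne ?_⟩
  · simp only [Finset.mem_filter, key]
    exact fun h => ⟨h.1, h.2.1⟩
  · have hval : ∀ i ∈ D, c i ≠ 1 → c i = c' i := by
      intro i hi h1
      have := hsub (Finset.mem_filter.2 ⟨hi, h1⟩)
      simp only [Finset.mem_filter, key] at this
      exact this.2.2
    have hsub' : D.filter (c · ≠ 1) ⊆ D.filter (c' · ≠ 1) := by
      intro i hi
      rw [Finset.mem_filter] at hi ⊢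
      exact ⟨hi.1, hval i hi.1 hi.2 ▸ hi.2⟩
    have he := Finset.eq_of_subset_of_card_le hsub' heq.ge
    refine hb.eq_of_eq_on_cover hc hc' hb' hD fun i hi => ?_
    have h1 := Finset.ext_iff.1 he i
    simp only [Finset.mem_filter, hi, true_and] at h1
    have h2 := hval i hi
    omega

end TwoCovers

section Monomials

variable {ι : Type*} [Fintype ι]

/-- The monomial with exponent vector `c` evaluated at `x`. -/
def monom {R : Type*} [CommMonoid R] (x : ι → R) (c : ι → ℕ) : R := ∏ i, x i ^ c i

theorem monom_add {R : Type*} [CommMonoid R] (x : ι → R) (c c' : ι → ℕ) :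
    monom x (c + c') = monom x c * monom x c' := by
  simp [monom, pow_add, Finset.prod_mul_distrib]

theorem monom_single {R : Type*} [CommMonoid R] [DecidableEq ι] (x : ι → R) (i : ι) :
    monom x (Pi.single i 1) = x i := by
  rw [monom, Finset.prod_eq_single i] <;> simp +contextual

theorem map_monom {R S : Type*} [CommSemiring R] [CommSemiring S] (f : R →+* S) (x : ι → R)
    (c : ι → ℕ) : f (monom x c) = monom (fun i => f (x i)) c := by
  simp [monom]

open Classical in
/-- The finite set of all basic `2`-covers. -/
noncomputable def basicCovers (G : SimpleGraph ι) : Finset (ι → ℕ) :=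
  (Fintype.piFinset fun _ => Finset.range 3).filter fun c => IsTwoCover G c ∧ IsBasic G c

theorem mem_basicCovers {G : SimpleGraph ι} {c : ι → ℕ} :
    c ∈ basicCovers G ↔ IsTwoCover G c ∧ IsBasic G c := by
  simp only [basicCovers, Finset.mem_filter, Fintype.mem_piFinset, Finset.mem_range,
    and_iff_right_iff_imp]
  exact fun h i => Nat.lt_succ_of_le (h.1.1 i)

/-- The sum of the monomials of the basic `2`-covers of a given rank. -/
noncomputable def rankSum {R : Type*} [CommSemiring R] (G : SimpleGraph ι) (φ : (ι → ℕ) → ℕ)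
    (x : ι → R) (k : ℕ) : R :=
  ∑ c ∈ (basicCovers G).filter (φ · = k), monom x c

/-- If the rank sums vanish at a point with topologically nilpotent coordinates, then so do the
monomials of all `2`-covers. -/
theorem monom_eq_zero_of_rankSum_eq_zero {L Γ₀ : Type*} [Field L]
    [LinearOrderedCommGroupWithZero Γ₀] (v : Valuation L Γ₀) {G : SimpleGraph ι}
    {φ : (ι → ℕ) → ℕ} (hφ : IsRank G φ) (x : ι → L) (hx : ∀ i, v (x i) < 1)
    (h0 : ∀ c, IsBasic G c → IsTwoCover G c → rankSum G φ x (φ c) = 0) (c : ι → ℕ)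
    (hc : IsTwoCover G c) : monom x c = 0 := by
  classical
  by_contra hne
  have hfin : {c | IsTwoCover G c}.Finite := by
    refine (Fintype.piFinset fun _ : ι => Finset.range 3).finite_toSet.subset fun c hc => ?_
    simpa using fun i => Nat.lt_succ_of_le (hc.1 i)
  obtain ⟨a, ha, hmax⟩ := hfin.exists_maximalFor (fun c => v (monom x c)) _ ⟨c, hc⟩
  replace hmax : ∀ b, IsTwoCover G b → v (monom x b) ≤ v (monom x a) := fun b hb =>
    (le_total _ _).elim id fun h => hmax hb h
  have hpos : 0 < v (monom x a) := (zero_lt_iff.2 ((v.ne_zero_iff).2 hne)).trans_le (hmax c hc)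
  have basic_of_max : ∀ b, IsTwoCover G b → v (monom x b) = v (monom x a) → IsBasic G b := by
    intro b hb hba
    by_contra hnb
    obtain ⟨i, b', hb', rfl⟩ := hb.exists_lower hnb
    rw [monom_add, monom_single, map_mul] at hba
    have h1 := hmax b' hb'
    have h2 : v (monom x b') * v (x i) < v (monom x a) := by
      rcases eq_or_ne (v (monom x b')) 0 with hz | hz
      · rw [hz, zero_mul]; exact hpos
      · exact (mul_lt_of_lt_one_right (zero_lt_iff.2 hz) (hx i)).trans_le h1
    exact h2.ne hba
  obtain ⟨b, ⟨hb, hba⟩, hmin⟩ := (hfin.subset fun c (hc : IsTwoCover G c ∧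
    v (monom x c) = v (monom x a)) => hc.1).exists_minimalFor φ _ ⟨a, ha, rfl⟩
  have hbb := basic_of_max b hb hba
  have hmem : b ∈ (basicCovers G).filter (φ · = φ b) :=
    Finset.mem_filter.2 ⟨mem_basicCovers.2 ⟨hb, hbb⟩, rfl⟩
  obtain ⟨b', hb', hlt⟩ : ∃ b' ∈ (basicCovers G).filter (φ · = φ b) \ {b},
      v (monom x b) ≤ v (monom x b') := by
    by_contra! hcon
    have := v.map_sum_eq_of_lt hmem hcon
    have hz : ∑ i ∈ (basicCovers G).filter (φ · = φ b), monom x i = 0 := h0 b hbb hb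
    rw [hz, map_zero, hba] at this
    exact hpos.ne this
  simp only [Finset.mem_sdiff, Finset.mem_filter, mem_basicCovers, Finset.mem_singleton] at hb'
  obtain ⟨⟨⟨hb'c, hb'b⟩, hφb⟩, hbne⟩ := hb'
  have hb'a : v (monom x b') = v (monom x a) := le_antisymm (hmax b' hb'c) (hba ▸ hlt)
  have hin := hb.innerPart hb'c
  have hout := hb.outerPart hb'c
  have hprod : v (monom x (innerPart b b')) * v (monom x (outerPart b b')) =
      v (monom x a) * v (monom x a) := by
    rw [← map_mul, ← monom_add, show innerPart b b' + outerPart b b' = b + b' from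
      funext (hb.innerPart_add_outerPart hb'c), monom_add, map_mul, hba, hb'a]
  have hina : v (monom x (innerPart b b')) = v (monom x a) := by
    refine le_antisymm (hmax _ hin) (not_lt.1 fun hl => ?_)
    refine (hprod.symm.le.trans (mul_le_mul_right (hmax _ hout) _)).not_gt ?_
    exact mul_lt_mul_of_pos_right hl hpos
  have hless := hφ b b' hb hbb hb'c hb'b (Ne.symm hbne) hφb.symm
  exact hless.not_ge (hmin ⟨hin, hina⟩ hless.le)

/-- In a local ring, a prime containing all rank sums contains the monomials of all `2`-covers. -/
theorem monom_mem_of_rankSum_mem {R : Type*} [CommRing R] [IsLocalRing R] {G : SimpleGraph ι}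
    {φ : (ι → ℕ) → ℕ} (hφ : IsRank G φ) (x : ι → R) (hx : ∀ i, ¬ IsUnit (x i)) (P : Ideal R)
    [P.IsPrime]
    (h0 : ∀ c, IsBasic G c → IsTwoCover G c → rankSum G φ x (φ c) ∈ P) (c : ι → ℕ)
    (hc : IsTwoCover G c) : monom x c ∈ P := by
  let L := FractionRing (R ⧸ P)
  let g : R →+* L := (algebraMap (R ⧸ P) L).comp (Ideal.Quotient.mk P)
  have hg : ∀ r, g r = 0 ↔ r ∈ P := by
    intro r
    simp only [g, RingHom.comp_apply]
    rw [map_eq_zero_iff _ (IsFractionRing.injective (R ⧸ P) L), Ideal.Quotient.eq_zero_iff_mem]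
  obtain ⟨A, hA, hloc⟩ := IsLocalRing.exists_factor_valuationRing g
  have hv : ∀ i, A.valuation (g (x i)) < 1 := by
    intro i
    have h1 : ¬ IsUnit (g.codRestrict A.toSubring hA (x i)) := fun h => hx i (hloc.map_nonunit _ h)
    have h2 := (A.valuation_lt_one_iff ⟨g (x i), hA (x i)⟩).1
    exact h2 ((IsLocalRing.mem_maximalIdeal _).2 h1)
  rw [← hg, map_monom]
  refine monom_eq_zero_of_rankSum_eq_zero A.valuation hφ _ hv (fun c hb hc => ?_) c hc
  have := (hg _).2 (h0 c hb hc)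
  simpa only [rankSum, map_sum, map_monom] using this

end Monomials

section VariableIdeals

variable {σ K : Type*} [Field K]

theorem isPrime_span_X_image (T : Set σ) :
    (Ideal.span (X '' T : Set (MvPolynomial σ K))).IsPrime := by
  classical
  let g : MvPolynomial σ K →ₐ[K] MvPolynomial σ K := aeval fun i => if i ∈ T then 0 else X i
  suffices h : Ideal.span (X '' T : Set (MvPolynomial σ K)) = RingHom.ker g.toRingHom by
    rw [h]; exact RingHom.ker_isPrime _
  apply le_antisymm
  · rw [Ideal.span_le]
    rintro _ ⟨i, hi, rfl⟩
    simp [RingHom.mem_ker, g, hi]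
  · intro p hp
    let q := Ideal.Quotient.mkₐ K (Ideal.span (X '' T : Set (MvPolynomial σ K)))
    have hq : q.comp g = q := by
      ext i
      by_cases hi : i ∈ T
      · have h1 : q (X i) = 0 :=
          Ideal.Quotient.eq_zero_iff_mem.2 (Ideal.subset_span ⟨i, hi, rfl⟩)
        simp [g, hi, h1]
      · simp [g, hi]
    have h2 : q p = 0 := by
      rw [← hq, AlgHom.comp_apply, show g p = 0 from hp, map_zero]
    exact Ideal.Quotient.eq_zero_iff_mem.1 h2

theorem X_mem_span_X_image {T : Set σ} {i : σ} :
    (X i : MvPolynomial σ K) ∈ Ideal.span (X '' T) ↔ i ∈ T := by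
  refine ⟨fun h => ?_, fun h => Ideal.subset_span ⟨i, h, rfl⟩⟩
  rw [mem_ideal_span_X_image] at h
  obtain ⟨j, hj, hne⟩ := h (Finsupp.single i 1) (by simp [support_X])
  rw [Finsupp.single_apply_ne_zero] at hne
  exact hne.1 ▸ hj

theorem card_le_height_span_X_image (T : Finset σ) :
    (T.card : ℕ∞) ≤ Order.height (⟨Ideal.span (X '' (T : Set σ)), isPrime_span_X_image _⟩ :
      PrimeSpectrum (MvPolynomial σ K)) := by
  classical
  induction T using Finset.induction_on with
  | empty => simp
  | insert a T ha ih =>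
    rw [Finset.card_insert_of_notMem ha, Nat.cast_add, Nat.cast_one]
    refine (add_le_add_left ih 1).trans (Order.height_add_one_le ?_)
    rw [← PrimeSpectrum.asIdeal_lt_asIdeal]
    refine lt_of_le_of_ne (Ideal.span_mono (Set.image_mono (by simp))) fun h => ha ?_
    have h1 : (X a : MvPolynomial σ K) ∈ Ideal.span (X '' (↑(insert a T) : Set σ)) :=
      X_mem_span_X_image.2 (by simp)
    rw [← show Ideal.span (X '' (T : Set σ)) = Ideal.span (X '' (↑(insert a T) : Set σ)) from h]
      at h1
    exact_mod_cast X_mem_span_X_image.1 h1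

/-- The ideal generated by a finite set of variables has height the number of variables. -/
theorem height_span_X_image [Finite σ] (T : Finset σ) :
    Order.height (⟨Ideal.span (X '' (T : Set σ)), isPrime_span_X_image _⟩ :
      PrimeSpectrum (MvPolynomial σ K)) = T.card := by
  classical
  refine le_antisymm ?_ (card_le_height_span_X_image T)
  rw [← PrimeSpectrum.height_eq_orderHeight]
  have := isPrime_span_X_image (K := K) (T : Set σ)
  have h := Ideal.height_le_card_of_mem_minimalPrimes_span_finset
    (p := Ideal.span (X '' (T : Set σ) : Set (MvPolynomial σ K))) (s := T.image X) (by
      rw [Finset.coe_image, Ideal.minimalPrimes_eq_subsingleton_self]; rfl)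
  exact h.trans (by exact_mod_cast Finset.card_image_le)

end VariableIdeals

section CoverIdeals

variable {K : Type*} [Field K] {σ : Type*}

/-- The graph whose edges are the pairs of distinct vertices meeting every member of `𝒮`. -/
def transversalGraph (𝒮 : Set (Finset σ)) : SimpleGraph σ where
  Adj i j := i ≠ j ∧ ∀ s ∈ 𝒮, i ∈ s ∨ j ∈ s
  symm := ⟨fun _ _ h => ⟨h.1.symm, fun s hs => (h.2 s hs).symm⟩⟩
  loopless := ⟨fun _ h => h.1 rfl⟩

variable (K) in
/-- The square-free monomial ideal generated by the products of the members of `𝒮`. -/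
noncomputable def squarefreeIdeal (𝒮 : Set (Finset σ)) : Ideal (MvPolynomial σ K) :=
  Ideal.span ((fun s : Finset σ => ∏ i ∈ s, X i) '' 𝒮)

theorem squarefreeIdeal_le_iff {𝒮 : Set (Finset σ)} {P : Ideal (MvPolynomial σ K)}
    (hP : P.IsPrime) : squarefreeIdeal K 𝒮 ≤ P ↔ ∀ s ∈ 𝒮, ∃ i ∈ s, X i ∈ P := by
  rw [squarefreeIdeal, Ideal.span_le, Set.image_subset_iff]
  exact forall₂_congr fun s _ => hP.prod_mem_iff

theorem exists_subset_support_of_monomial_mem {𝒮 : Set (Finset σ)} {u : σ →₀ ℕ}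
    (hu : monomial u (1 : K) ∈ squarefreeIdeal K 𝒮) : ∃ s ∈ 𝒮, s ⊆ u.support := by
  by_contra! hcon
  have hP := isPrime_span_X_image (K := K) {i | i ∉ u.support}
  have hle := (squarefreeIdeal_le_iff hP).2 fun s hs => by
    obtain ⟨i, hi, hiu⟩ := Finset.not_subset.1 (hcon s hs)
    exact ⟨i, hi, X_mem_span_X_image.2 hiu⟩
  obtain ⟨i, hi, hne⟩ := mem_ideal_span_X_image.1 (hle hu) u (by
    classical simp [coeff_monomial])
  exact hi (Finsupp.mem_support_iff.2 hne)

variable [Finite σ] {𝒮 : Set (Finset σ)}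

/-- A prime containing a square-free monomial ideal of pure codimension two contains both ends of
some edge of the associated graph. -/
theorem exists_adj_X_mem
    (hpure : ∀ P : Ideal (MvPolynomial σ K), ∀ hP : P ∈ (squarefreeIdeal K 𝒮).minimalPrimes,
      Order.height (⟨P, hP.1.1⟩ : PrimeSpectrum (MvPolynomial σ K)) = 2)
    {P : Ideal (MvPolynomial σ K)} (hP : P.IsPrime)
    (hle : squarefreeIdeal K 𝒮 ≤ P) :
    ∃ i j, (transversalGraph 𝒮).Adj i j ∧ X i ∈ P ∧ X j ∈ P := by
  classical
  obtain ⟨Q, hQ, hQP⟩ := Ideal.exists_minimalPrimes_le hle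
  obtain ⟨T, hT⟩ : ∃ T : Finset σ, (T : Set σ) = {i | (X i : MvPolynomial σ K) ∈ Q} :=
    (Set.toFinite _).exists_finset_coe
  have hTQ : Ideal.span (X '' (T : Set σ)) ≤ Q := by
    rw [Ideal.span_le, hT]
    rintro _ ⟨i, hi, rfl⟩
    exact hi
  have hTI : squarefreeIdeal K 𝒮 ≤ Ideal.span (X '' (T : Set σ)) := by
    rw [squarefreeIdeal_le_iff (isPrime_span_X_image _)]
    intro s hs
    obtain ⟨i, hi, hiQ⟩ := (squarefreeIdeal_le_iff hQ.1.1).1 hQ.1.2 s hs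
    exact ⟨i, hi, X_mem_span_X_image.2 (hT ▸ hiQ)⟩
  have hQT : Q = Ideal.span (X '' (T : Set σ)) :=
    le_antisymm (hQ.2 ⟨isPrime_span_X_image _, hTI⟩ hTQ) hTQ
  have hcard : T.card = 2 := by
    have h1 := hpure Q hQ
    subst hQT
    rw [height_span_X_image] at h1
    exact_mod_cast h1
  obtain ⟨i, j, hij, rfl⟩ := Finset.card_eq_two.1 hcard
  have hiQ : X i ∈ Q := hTQ (X_mem_span_X_image.2 (by simp))
  have hjQ : X j ∈ Q := hTQ (X_mem_span_X_image.2 (by simp))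
  refine ⟨i, j, ⟨hij, fun s hs => ?_⟩, hQP hiQ, hQP hjQ⟩
  obtain ⟨k, hk, hkQ⟩ := (squarefreeIdeal_le_iff (isPrime_span_X_image _)).1 hTI s hs
  have := X_mem_span_X_image.1 hkQ
  simp only [Finset.coe_insert, Finset.coe_singleton, Set.mem_insert_iff,
    Set.mem_singleton_iff] at this
  rcases this with rfl | rfl
  · exact Or.inl hk
  · exact Or.inr hk

/-- Every vertex cover of the associated graph contains a generator. -/
theorem exists_subset_of_cover
    (hpure : ∀ P : Ideal (MvPolynomial σ K), ∀ hP : P ∈ (squarefreeIdeal K 𝒮).minimalPrimes,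
      Order.height (⟨P, hP.1.1⟩ : PrimeSpectrum (MvPolynomial σ K)) = 2)
    {D : Finset σ}
    (hD : ∀ i j, (transversalGraph 𝒮).Adj i j → i ∈ D ∨ j ∈ D) : ∃ s ∈ 𝒮, s ⊆ D := by
  by_contra! hcon
  have hP := isPrime_span_X_image (K := K) {i | i ∉ D}
  have hle := (squarefreeIdeal_le_iff hP).2 fun s hs => by
    obtain ⟨i, hi, hiD⟩ := Finset.not_subset.1 (hcon s hs)
    exact ⟨i, hi, X_mem_span_X_image.2 hiD⟩
  obtain ⟨i, j, hij, hi, hj⟩ := exists_adj_X_mem hpure hP hle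
  exact (hD i j hij).elim (X_mem_span_X_image.1 hi) (X_mem_span_X_image.1 hj)

end CoverIdeals

/-- A rank function with values at most `r` on the basic `2`-covers bounds the arithmetical rank by
`r + 1`. -/
theorem ara_le_of_isRank {K : Type*} [Field K] {n : ℕ} {𝒮 : Set (Finset (Fin n))}
    (hpure : ∀ P : Ideal (MvPolynomial (Fin n) K),
      ∀ hP : P ∈ (squarefreeIdeal K 𝒮).minimalPrimes,
        Order.height (⟨P, hP.1.1⟩ : PrimeSpectrum (MvPolynomial (Fin n) K)) = 2)
    {φ : (Fin n → ℕ) → ℕ} (hφ : IsRank (transversalGraph 𝒮) φ) {r : ℕ}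
    (hr : ∀ c, IsTwoCover (transversalGraph 𝒮) c → φ c ≤ r) :
    ara ((squarefreeIdeal K 𝒮).map (algebraMap (MvPolynomial (Fin n) K) (SLoc K n))) ≤ r + 1 := by
  let ψ := algebraMap (MvPolynomial (Fin n) K) (SLoc K n)
  let x : Fin n → SLoc K n := fun i => ψ (X i)
  have hx : ∀ i, ¬ IsUnit (x i) := by
    intro i
    refine (IsLocalRing.mem_maximalIdeal _).1 ?_
    exact (IsLocalization.AtPrime.to_map_mem_maximal_iff (SLoc K n) (mIdeal K n) (X i)).2
      (Ideal.subset_span ⟨i, rfl⟩)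
  refine Nat.sInf_le ⟨fun k => rankSum (transversalGraph 𝒮) φ x k, le_antisymm ?_ ?_⟩
  · rw [Ideal.radical_le_radical_iff, Ideal.span_le]
    rintro _ ⟨k, rfl⟩
    refine Ideal.sum_mem _ fun c hc => ?_
    have hcov := (mem_basicCovers.1 (Finset.mem_filter.1 hc).1).1
    rw [Ideal.radical_eq_sInf, Submodule.mem_sInf]
    rintro P ⟨hIP, hP⟩
    obtain ⟨i, j, hij, hi, hj⟩ := exists_adj_X_mem hpure (hP.comap ψ)
      (Ideal.map_le_iff_le_comap.1 hIP)
    have h2 := hcov.2 i j hij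
    have hdvd : ∀ l, c l ≠ 0 → ψ (X l) ∈ P → monom x c ∈ P := fun l hl hlP =>
      Ideal.mem_of_dvd _ (Finset.dvd_prod_of_mem _ (Finset.mem_univ l))
        (Ideal.pow_mem_of_mem P hlP _ (Nat.pos_of_ne_zero hl))
    by_cases h0 : c i = 0
    · exact hdvd j (by omega) hj
    · exact hdvd i h0 hi
  · rw [Ideal.radical_le_radical_iff, Ideal.map_le_iff_le_comap, squarefreeIdeal, Ideal.span_le]
    rintro _ ⟨s, hs, rfl⟩
    rw [SetLike.mem_coe, Ideal.mem_comap, Ideal.radical_eq_sInf, Submodule.mem_sInf]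
    rintro P ⟨hfP, hP⟩
    have hcov : IsTwoCover (transversalGraph 𝒮) fun i => if i ∈ s then 2 else 0 := by
      refine ⟨fun i => by dsimp only; split_ifs <;> omega, fun i j hij => ?_⟩
      have := hij.2 s hs
      dsimp only
      split_ifs <;> first | omega | tauto
    have hmem := monom_mem_of_rankSum_mem hφ x hx P (fun c _ hc =>
      hfP (Ideal.subset_span ⟨⟨φ c, Nat.lt_succ_of_le (hr c hc)⟩, rfl⟩)) _ hcov
    obtain ⟨i, -, hi⟩ := hP.prod_mem_iff.1 hmem
    by_cases his : i ∈ s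
    · rw [map_prod]
      exact Ideal.mem_of_dvd _ (Finset.dvd_prod_of_mem _ his) (hP.mem_of_pow_mem _ hi)
    · simp only [his, if_false, pow_zero] at hi
      exact absurd ((Ideal.eq_top_iff_one _).2 hi) hP.ne_top

/-- Let `K` be an infinite field and `I ⊆ S = K[x_1,…,x_n]` a square-free
monomial ideal of pure codimension 2 (every minimal prime of `I` has height 2), and let `d`
be the minimum degree of a nonzero monomial in `I`. Then
`ara(I S_m) ≤ min {d + 1, n − d + 1}`. -/
theorem ara_squarefree_pure_codim_two (K : Type*) [Field K] [Infinite K] {n : ℕ}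
    (I : Ideal (MvPolynomial (Fin n) K))
    (hsqfree : ∃ 𝒮 : Set (Finset (Fin n)),
      I = Ideal.span ((fun s : Finset (Fin n) => ∏ i ∈ s, MvPolynomial.X i) '' 𝒮))
    (hpure : ∀ P : Ideal (MvPolynomial (Fin n) K), ∀ hP : P ∈ I.minimalPrimes,
      Order.height (⟨P, hP.1.1⟩ : PrimeSpectrum (MvPolynomial (Fin n) K)) = 2)
    (d : ℕ)
    (hd : d = sInf {m : ℕ | ∃ u : Fin n →₀ ℕ,
      (MvPolynomial.monomial u (1 : K)) ∈ I ∧ m = u.sum fun _ e => e}) :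
    ara (I.map (algebraMap (MvPolynomial (Fin n) K) (SLoc K n))) ≤
      min (d + 1) (n - d + 1) := by
  obtain ⟨𝒮, rfl⟩ := hsqfree
  have hle : ∀ s ∈ 𝒮, d ≤ s.card := by
    intro s hs
    rw [hd]
    refine Nat.sInf_le ⟨∑ i ∈ s, Finsupp.single i 1, ?_, ?_⟩
    · rw [monomial_sum_one]
      exact Ideal.subset_span ⟨s, hs, rfl⟩
    · change _ = Finsupp.degree _
      simp
  have hex : ∃ s ∈ 𝒮, s.card ≤ d := by
    obtain ⟨s, hs, -⟩ := exists_subset_of_cover hpure (D := Finset.univ) (by simp)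
    obtain ⟨u, hu, hdu⟩ := Nat.sInf_mem (s := {m : ℕ | ∃ u : Fin n →₀ ℕ,
        (MvPolynomial.monomial u (1 : K)) ∈ squarefreeIdeal K 𝒮 ∧ m = u.sum fun _ e => e})
      ⟨_, ∑ i ∈ s, Finsupp.single i 1, by
        rw [monomial_sum_one]; exact Ideal.subset_span ⟨s, hs, rfl⟩, rfl⟩
    obtain ⟨t, ht, htu⟩ := exists_subset_support_of_monomial_mem hu
    refine ⟨t, ht, (Finset.card_le_card htu).trans ?_⟩
    rw [show d = u.sum fun _ e => e from hd.trans hdu, Finsupp.sum, Finset.card_eq_sum_ones]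
    exact Finset.sum_le_sum fun i hi => Nat.pos_of_ne_zero (Finsupp.mem_support_iff.1 hi)
  refine le_min ?_ ?_
  · obtain ⟨D, hD, hDd⟩ := hex
    exact ara_le_of_isRank hpure (isRank_card_ne_one fun i j hij => hij.2 D hD) fun c _ =>
      (Finset.card_filter_le _ _).trans hDd
  · refine ara_le_of_isRank hpure (isRank_card_zeros _) fun c hc => ?_
    obtain ⟨s, hs, hsub⟩ := exists_subset_of_cover hpure
      (D := Finset.univ.filter fun i => ¬ c i = 0) fun i j hij => by
        have := hc.2 i j hij
        simp only [Finset.mem_filter, Finset.mem_univ, true_and]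
        omega
    have h1 := (hle s hs).trans (Finset.card_le_card hsub)
    have h2 := Finset.card_filter_add_card_filter_not (s := (Finset.univ : Finset (Fin n)))
      fun i => c i = 0
    rw [Finset.card_univ, Fintype.card_fin] at h2
    omega
end

section
/- Let G be a graph satisfying the weak square condition (WSC) which has a unique perfect matching M. Then every edge of M is a right edge of G. -/
/-- `{i,j}` is a right edge of `G`: it is an edge, and whenever `{i,i'}` and `{j,j'}` are
edges, so is `{i',j'}`. -/
def IsRightEdge {n : ℕ} (G : SimpleGraph (Fin n)) (i j : Fin n) : Prop :=
  G.Adj i j ∧ ∀ i' j' : Fin n, G.Adj i i' → G.Adj j j' → G.Adj i' j'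

/-- Exchanging the matching edges `{i,j}` and `{w,k}` of a perfect matching for the edges
`{i,w}` and `{j,k}` gives a perfect matching. -/
theorem SimpleGraph.Subgraph.IsPerfectMatching.exists_swap {V : Type*} {G : SimpleGraph V}
    {M : G.Subgraph} (hM : M.IsPerfectMatching) {i j w k : V} (hij : M.Adj i j)
    (hwk : M.Adj w k) (hiw : G.Adj i w) (hjk : G.Adj j k) (hne : j ≠ w) :
    ∃ M' : G.Subgraph, M'.IsPerfectMatching ∧ M'.Adj i w := by
  rw [SimpleGraph.Subgraph.isPerfectMatching_iff] at hM
  have huniq : ∀ {a b c : V}, M.Adj a b → M.Adj a c → b = c :=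
    fun hb hc => (hM _).unique hb hc
  have hij_ne := hij.ne
  have hwk_ne := hwk.ne
  have hiw_ne := hiw.ne
  have hjk_ne := hjk.ne
  have hik_ne : i ≠ k := by
    rintro rfl
    exact hne (huniq hij hwk.symm)
  let M' : G.Subgraph :=
    { verts := Set.univ
      Adj := fun a b =>
        (M.Adj a b ∧ (a ≠ i ∧ a ≠ j ∧ a ≠ w ∧ a ≠ k) ∧ (b ≠ i ∧ b ≠ j ∧ b ≠ w ∧ b ≠ k)) ∨
        (a = i ∧ b = w) ∨ (a = w ∧ b = i) ∨ (a = j ∧ b = k) ∨ (a = k ∧ b = j)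
      adj_sub := by
        rintro a b (h | ⟨rfl, rfl⟩ | ⟨rfl, rfl⟩ | ⟨rfl, rfl⟩ | ⟨rfl, rfl⟩)
        exacts [h.1.adj_sub, hiw, hiw.symm, hjk, hjk.symm]
      edge_vert := fun _ => Set.mem_univ _
      symm := ⟨fun a b h => by
        have := M.adj_comm a b
        tauto⟩ }
  refine ⟨M', SimpleGraph.Subgraph.isPerfectMatching_iff.2 fun v => ?_,
    Or.inr (Or.inl ⟨rfl, rfl⟩)⟩
  by_cases hvi : v = i
  · exact ⟨w, by grind, by grind⟩
  by_cases hvj : v = j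
  · exact ⟨k, by grind, by grind⟩
  by_cases hvw : v = w
  · exact ⟨i, by grind, by grind⟩
  by_cases hvk : v = k
  · exact ⟨j, by grind, by grind⟩
  obtain ⟨u, hu, -⟩ := hM v
  refine ⟨u, Or.inl ⟨hu, ⟨hvi, hvj, hvw, hvk⟩, ?_, ?_, ?_, ?_⟩, ?_⟩
  · rintro rfl
    exact hvj (huniq hu.symm hij)
  · rintro rfl
    exact hvi (huniq hu.symm hij.symm)
  · rintro rfl
    exact hvk (huniq hu.symm hwk)
  · rintro rfl
    exact hvw (huniq hu.symm hwk.symm)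
  · rintro y (h | h | h | h | h)
    · exact huniq h.1 hu
    all_goals exact absurd h.1 (by assumption)

/-- Let `G` be a graph satisfying the weak square condition (every vertex
lies in a right edge) which has a unique perfect matching `M`. Then every edge of `M` is a
right edge of `G`. -/
theorem unique_perfect_matching_right_edges {n : ℕ} (G : SimpleGraph (Fin n))
    (hWSC : ∀ v : Fin n, ∃ w : Fin n, IsRightEdge G v w)
    (M : G.Subgraph) (hM : M.IsPerfectMatching)
    (huniq : ∀ M' : G.Subgraph, M'.IsPerfectMatching → M' = M) :
    ∀ i j : Fin n, M.Adj i j → IsRightEdge G i j := by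
  intro i j hij
  obtain ⟨w, hiw, hright⟩ := hWSC i
  by_cases hne : j = w
  · exact hne ▸ ⟨hiw, hright⟩
  have hM' := SimpleGraph.Subgraph.isPerfectMatching_iff.1 hM
  obtain ⟨k, hwk, -⟩ := hM' w
  obtain ⟨M', hperf, hadj⟩ :=
    hM.exists_swap hij hwk hiw (hright j k hij.adj_sub hwk.adj_sub) hne
  rw [huniq M' hperf] at hadj
  exact absurd ((hM' i).unique hij hadj) hne
end
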